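/- Let M be a log-convex weight sequence. Then the following are equivalent: (i) the set ⋃_{c>0} H^∞_{v_{M,c}}(ℂ) is closed under pointwise multiplication; (ii) the set ⋂_{c>0} H^∞_{v_{M,c}}(ℂ) is closed under pointwise multiplication; (iii) M has moderate growth (mg). -/

import Mathlib

open Filter Set

/-- The associated weight function `ω_M(t) = sup_j log(t^j / M_j)` for `t ≠ 0`, `ω_M(0) = 0`. -/
noncomputable def omegaM (M : ℕ → ℝ) (t : ℝ) : ℝ :=
  if t = 0 then 0 else ⨆ j : ℕ, Real.log (t ^ j / M j)

/-- `v_M(t) = exp(-ω_M(t))`. -/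
noncomputable def vM (M : ℕ → ℝ) (t : ℝ) : ℝ :=
  Real.exp (-(omegaM M t))

/-- `v_{M,c}(t) = exp(-ω_M(c·t))`. -/
noncomputable def vMc (M : ℕ → ℝ) (c t : ℝ) : ℝ :=
  Real.exp (-(omegaM M (c * t)))

/-- `v_M^c(t) = exp(-c·ω_M(t))`. -/
noncomputable def vMpow (M : ℕ → ℝ) (c t : ℝ) : ℝ :=
  Real.exp (-(c * omegaM M t))

/-- A weight sequence: positive, `M_0 = 1`, `(M_j)^{1/j} → ∞`. -/
def WeightSeq (M : ℕ → ℝ) : Prop :=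
  (∀ j, 0 < M j) ∧ M 0 = 1 ∧
    Tendsto (fun j : ℕ => (M j) ^ (1 / (j : ℝ))) atTop atTop

/-- Log-convexity: `M_j² ≤ M_{j-1}·M_{j+1}` for `j ≥ 1`. -/
def LogConvexSeq (M : ℕ → ℝ) : Prop :=
  ∀ j : ℕ, 1 ≤ j → (M j) ^ 2 ≤ M (j - 1) * M (j + 1)

/-- The class `LC`: normalized log-convex weight sequences. -/
def LCset (M : ℕ → ℝ) : Prop :=
  WeightSeq M ∧ LogConvexSeq M ∧ 1 ≤ M 1

/-- Weighted space of entire functions with `sup |f(z)|·v(|z|) < ∞`. -/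
def Hinf (v : ℝ → ℝ) : Set (ℂ → ℂ) :=
  {f | Differentiable ℂ f ∧
    ∃ C : ℝ, ∀ z : ℂ, ‖f z‖ * v ‖z‖ ≤ C}

/-- The weighted sup-norm `‖f‖_v`. -/
noncomputable def wnorm (v : ℝ → ℝ) (f : ℂ → ℂ) : ℝ :=
  ⨆ z : ℂ, ‖f z‖ * v ‖z‖

/-- A weight: strictly positive, continuous, non-increasing and rapidly
decreasing on `[0,∞)`. -/
def IsWeight (v : ℝ → ℝ) : Prop :=
  (∀ t : ℝ, 0 ≤ t → 0 < v t) ∧ ContinuousOn v (Set.Ici 0) ∧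
    AntitoneOn v (Set.Ici 0) ∧
    ∀ k : ℕ, Tendsto (fun t : ℝ => t ^ k * v t) atTop (nhds 0)

/-- A normalized weight: `v ≡ 1` on `[0,1]`. -/
def NormalizedWeight (v : ℝ → ℝ) : Prop :=
  ∀ t : ℝ, 0 ≤ t → t ≤ 1 → v t = 1

/-- A (log-)convex weight: `t ↦ -log v(eᵗ)` is convex on `ℝ`. -/
def ConvexWeight (v : ℝ → ℝ) : Prop :=
  ConvexOn ℝ Set.univ fun t : ℝ => -Real.log (v (Real.exp t))

/-- Moderate growth for a weight: `v(H·t) ≤ e^H · v(t)²`. -/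
def ModerateGrowthW (v : ℝ → ℝ) : Prop :=
  ∃ H : ℝ, 1 ≤ H ∧ ∀ t : ℝ, 0 ≤ t → v (H * t) ≤ Real.exp H * (v t) ^ 2

/-- Moderate growth (mg) for a sequence: `M_{j+k} ≤ C^{j+k}·M_j·M_k`. -/
def MGseq (M : ℕ → ℝ) : Prop :=
  ∃ C : ℝ, 1 ≤ C ∧ ∀ j k : ℕ, M (j + k) ≤ C ^ (j + k) * M j * M k

/-- The associated weight sequence `M^v_j = sup_{t>0} t^j·v(t)`. -/
noncomputable def assocSeq (v : ℝ → ℝ) (j : ℕ) : ℝ :=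
  ⨆ t : Set.Ioi (0 : ℝ), (t : ℝ) ^ j * v t

/-- The unit ball `B_{1/v}(ℂ)` of entire functions bounded by `1/v`. -/
def BClass (v : ℝ → ℝ) : Set (ℂ → ℂ) :=
  {f | Differentiable ℂ f ∧ ∀ z : ℂ, ‖f z‖ ≤ 1 / v ‖z‖}

/-- The associated growth condition `w̃_v(z) = sup{|f(z)| : f ∈ B_{1/v}}`. -/
noncomputable def wTilde (v : ℝ → ℝ) (z : ℂ) : ℝ :=
  sSup {x : ℝ | ∃ f ∈ BClass v, x = ‖f z‖}

/-- The associated weight `ṽ = 1/w̃_v`, as a function of `t = |z|`. -/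
noncomputable def vTilde (v : ℝ → ℝ) (t : ℝ) : ℝ :=
  1 / wTilde v (t : ℂ)

/-- An essential weight: `v ∼ ṽ`. -/
def Essential (v : ℝ → ℝ) : Prop :=
  ∃ C : ℝ, 1 ≤ C ∧ ∀ t : ℝ, 0 ≤ t →
    v t ≤ C * vTilde v t ∧ vTilde v t ≤ C * v t

/-- `P_v(t) = sup_j t^j/‖z^j‖_v`. -/
noncomputable def Pfun (v : ℝ → ℝ) (t : ℝ) : ℝ :=
  ⨆ j : ℕ, t ^ j / wnorm v fun z : ℂ => z ^ j

/-- The convolved sequence `(M⋆N)_j = min_{0≤k≤j} M_k·N_{j-k}`. -/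
noncomputable def convSeq (M N : ℕ → ℝ) (j : ℕ) : ℝ :=
  (Finset.range (j + 1)).inf' Finset.nonempty_range_add_one fun k => M k * N (j - k)
theorem aux_bdd {M : ℕ → ℝ} (hM : WeightSeq M) {t : ℝ} (ht : 0 < t) :
    BddAbove (Set.range fun j : ℕ => Real.log (t ^ j / M j)) := by
  obtain ⟨hpos, h0, hlim⟩ := hM
  apply IsBoundedUnder.bddAbove_range
  refine ⟨0, ?_⟩
  rw [eventually_map]
  filter_upwards [hlim.eventually_ge_atTop t, eventually_ge_atTop 1] with j hj hj1
  have hj0 : (j : ℝ) ≠ 0 := by positivity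
  have h1 : t ^ j ≤ M j := by
    calc t ^ j ≤ ((M j) ^ (1 / (j : ℝ))) ^ j := by gcongr
      _ = M j := by
        rw [← Real.rpow_natCast, ← Real.rpow_mul (hpos j).le]
        simp [hj0]
  apply Real.log_nonpos
  · exact div_nonneg (pow_nonneg ht.le j) (hpos j).le
  · rw [div_le_one (hpos j)]; exact h1

theorem aux_le_E {M : ℕ → ℝ} (hM : WeightSeq M) {t : ℝ} (ht : 0 ≤ t) (j : ℕ) :
    t ^ j / M j ≤ Real.exp (omegaM M t) := by
  have hpos := hM.1
  rcases ht.eq_or_lt with rfl | ht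
  · rcases Nat.eq_zero_or_pos j with rfl | hj
    · simp [omegaM, hM.2.1]
    · rw [zero_pow hj.ne', zero_div]; exact (Real.exp_pos _).le
  · have h1 : 0 < t ^ j / M j := div_pos (pow_pos ht j) (hpos j)
    rw [← Real.log_le_iff_le_exp h1, omegaM, if_neg ht.ne']
    exact le_ciSup (aux_bdd hM ht) j

theorem aux_E_le {M : ℕ → ℝ} (hM : WeightSeq M) {t B : ℝ} (ht : 0 ≤ t)
    (h : ∀ j, t ^ j / M j ≤ B) : Real.exp (omegaM M t) ≤ B := by
  have hpos := hM.1
  have hB : 0 < B := by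
    have := h 0
    simp [hM.2.1] at this
    linarith
  rcases ht.eq_or_lt with rfl | ht
  · have := h 0
    simp [hM.2.1] at this
    simpa [omegaM] using this
  · rw [← Real.le_log_iff_exp_le hB, omegaM, if_neg ht.ne']
    apply ciSup_le
    intro j
    exact Real.log_le_log (div_pos (pow_pos ht j) (hpos j)) (h j)

theorem aux_mem {M : ℕ → ℝ} {c : ℝ} {f : ℂ → ℂ} :
    f ∈ Hinf (vMc M c) ↔ Differentiable ℂ f ∧
      ∃ C : ℝ, ∀ z : ℂ, ‖f z‖ ≤ C * Real.exp (omegaM M (c * ‖z‖)) := by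
  simp only [Hinf, vMc, Set.mem_ofPred_eq]
  refine and_congr_right fun _ => exists_congr fun C => forall_congr' fun z => ?_
  rw [Real.exp_neg, ← div_eq_mul_inv, div_le_iff₀ (Real.exp_pos _)]

theorem aux_E_mono {M : ℕ → ℝ} (hM : WeightSeq M) {s t : ℝ} (hs : 0 ≤ s) (hst : s ≤ t) :
    Real.exp (omegaM M s) ≤ Real.exp (omegaM M t) := by
  apply aux_E_le hM hs
  intro j
  refine le_trans ?_ (aux_le_E hM (hs.trans hst) j)
  have := (hM.1 j).le
  gcongr

theorem aux_E_sq {M : ℕ → ℝ} (hM : WeightSeq M) {C : ℝ} (hC : 1 ≤ C)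
    (h : ∀ j k : ℕ, M (j + k) ≤ C ^ (j + k) * M j * M k) {s : ℝ} (hs : 0 ≤ s) :
    Real.exp (omegaM M s) * Real.exp (omegaM M s) ≤ Real.exp (omegaM M (C * s)) := by
  have hpos := hM.1
  have key : ∀ j k : ℕ, s ^ j / M j * (s ^ k / M k) ≤ Real.exp (omegaM M (C * s)) := by
    intro j k
    refine le_trans ?_ (aux_le_E hM (by positivity : 0 ≤ C * s) (j + k))
    have hj := hpos j
    have hk := hpos k
    have hjk := hpos (j + k)
    rw [div_mul_div_comm, div_le_div_iff₀ (by positivity) hjk, mul_pow, ← pow_add]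
    calc s ^ (j + k) * M (j + k) ≤ s ^ (j + k) * (C ^ (j + k) * M j * M k) := by
          gcongr; exact h j k
      _ = _ := by ring
  rw [← le_div_iff₀ (Real.exp_pos _)]
  apply aux_E_le hM hs
  intro j
  rw [le_div_iff₀ (Real.exp_pos _), mul_comm]
  rcases (div_nonneg (pow_nonneg hs j) (hpos j).le).eq_or_lt with h0 | h0
  · rw [← h0, mul_zero]; exact (Real.exp_pos _).le
  · rw [← le_div_iff₀ h0]
    apply aux_E_le hM hs
    intro k
    rw [le_div_iff₀ h0, mul_comm]
    exact key j k

theorem aux_mul {M : ℕ → ℝ} (hM : WeightSeq M) {C : ℝ} (hC : 1 ≤ C)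
    (h : ∀ j k : ℕ, M (j + k) ≤ C ^ (j + k) * M j * M k) {c : ℝ} (hc : 0 < c)
    {f g : ℂ → ℂ} (hf : f ∈ Hinf (vMc M c)) (hg : g ∈ Hinf (vMc M c)) :
    (fun z => f z * g z) ∈ Hinf (vMc M (C * c)) := by
  rw [aux_mem] at *
  obtain ⟨hf, A, hA⟩ := hf
  obtain ⟨hg, B, hB⟩ := hg
  refine ⟨hf.mul hg, |A| * |B|, fun z => ?_⟩
  rw [norm_mul]
  set e := Real.exp (omegaM M (c * ‖z‖)) with he
  have hepos : 0 < e := Real.exp_pos _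
  have h1 : ‖f z‖ ≤ |A| * e := (hA z).trans (by gcongr; exact le_abs_self A)
  have h2 : ‖g z‖ ≤ |B| * e := (hB z).trans (by gcongr; exact le_abs_self B)
  have h3 : e * e ≤ Real.exp (omegaM M (C * c * ‖z‖)) := by
    rw [mul_assoc]; exact aux_E_sq hM hC h (by positivity)
  calc ‖f z‖ * ‖g z‖ ≤ (|A| * e) * (|B| * e) := by gcongr
    _ = |A| * |B| * (e * e) := by ring
    _ ≤ _ := by gcongr

theorem aux_Hmono {M : ℕ → ℝ} (hM : WeightSeq M) {c d : ℝ} (hc : 0 < c) (hcd : c ≤ d)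
    {f : ℂ → ℂ} (hf : f ∈ Hinf (vMc M c)) : f ∈ Hinf (vMc M d) := by
  rw [aux_mem] at *
  obtain ⟨hf, A, hA⟩ := hf
  refine ⟨hf, |A|, fun z => (hA z).trans ?_⟩
  have := aux_E_mono hM (by positivity : 0 ≤ c * ‖z‖)
    (by gcongr : c * ‖z‖ ≤ d * ‖z‖)
  calc _ ≤ |A| * Real.exp (omegaM M (c * ‖z‖)) := by gcongr; exact le_abs_self A
    _ ≤ _ := by gcongr

/-- The power series with coefficients `a j / M j`. -/
noncomputable def auxF (M a : ℕ → ℝ) (z : ℂ) : ℂ := ∑' j : ℕ, ((a j / M j : ℝ) : ℂ) * z ^ j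

theorem aux_term {M : ℕ → ℝ} (hM : WeightSeq M) {a : ℕ → ℝ} (ha : ∀ j, 0 ≤ a j) {c : ℝ}
    (hc : 0 < c) {R : ℝ} (hR : 0 ≤ R) (j : ℕ) :
    a j / M j * R ^ j ≤ a j / c ^ j * Real.exp (omegaM M (c * R)) := by
  have h := aux_le_E hM (by positivity : 0 ≤ c * R) j
  have := ha j
  have hj := hM.1 j
  calc a j / M j * R ^ j = a j / c ^ j * ((c * R) ^ j / M j) := by rw [mul_pow]; field_simp
    _ ≤ _ := by gcongr

theorem aux_norm {M : ℕ → ℝ} (hM : WeightSeq M) {a : ℕ → ℝ} (ha : ∀ j, 0 ≤ a j) (z : ℂ) (j : ℕ) :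
    ‖((a j / M j : ℝ) : ℂ) * z ^ j‖ = a j / M j * ‖z‖ ^ j := by
  rw [norm_mul, norm_pow, Complex.norm_real, Real.norm_of_nonneg (div_nonneg (ha j) (hM.1 j).le)]

theorem aux_summ {M : ℕ → ℝ} (hM : WeightSeq M) {a : ℕ → ℝ} (ha : ∀ j, 0 ≤ a j) {c : ℝ}
    (hc : 0 < c) (hs : Summable fun j => a j / c ^ j) {R : ℝ} (hR : 0 ≤ R) :
    Summable fun j => a j / M j * R ^ j :=
  Summable.of_nonneg_of_le
    (fun j => mul_nonneg (div_nonneg (ha j) (hM.1 j).le) (pow_nonneg hR j))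
    (fun j => aux_term hM ha hc hR j) (hs.mul_right _)

theorem aux_F_mem {M : ℕ → ℝ} (hM : WeightSeq M) {a : ℕ → ℝ} (ha : ∀ j, 0 ≤ a j) {c : ℝ}
    (hc : 0 < c) (hs : Summable fun j => a j / c ^ j) : auxF M a ∈ Hinf (vMc M c) := by
  rw [aux_mem]
  constructor
  · intro z
    have hd : DifferentiableOn ℂ (auxF M a) (Metric.ball 0 (‖z‖ + 1)) := by
      refine Complex.differentiableOn_tsum_of_summable_norm
        (aux_summ hM ha hc hs (by positivity : 0 ≤ ‖z‖ + 1)) ?_ Metric.isOpen_ball ?_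
      · intro i
        fun_prop
      · intro i w hw
        rw [aux_norm hM ha]
        have hw' : ‖w‖ ≤ ‖z‖ + 1 := by
          simpa using (mem_ball_zero_iff.1 hw).le
        have := div_nonneg (ha i) (hM.1 i).le
        gcongr
    exact hd.differentiableAt (Metric.isOpen_ball.mem_nhds (by simp))
  · refine ⟨∑' j, a j / c ^ j, fun z => ?_⟩
    rw [← tsum_mul_right]
    refine tsum_of_norm_bounded (hs.mul_right _).hasSum fun j => ?_
    rw [aux_norm hM ha]
    exact aux_term hM ha hc (norm_nonneg z) j

theorem aux_F_ge {M : ℕ → ℝ} (hM : WeightSeq M) {a : ℕ → ℝ} (ha : ∀ j, 0 ≤ a j) {c : ℝ}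
    (hc : 0 < c) (hs : Summable fun j => a j / c ^ j) {t : ℝ} (ht : 0 ≤ t) (j : ℕ) :
    a j / M j * t ^ j ≤ ‖auxF M a t‖ := by
  have h1 : auxF M a t = ((∑' j, a j / M j * t ^ j : ℝ) : ℂ) := by
    rw [auxF, Complex.ofReal_tsum]
    congr 1; ext j; push_cast; rfl
  rw [h1, Complex.norm_real]
  refine le_trans ?_ (Real.le_norm_self _)
  exact (aux_summ hM ha hc hs ht).le_tsum j
    (fun i _ => mul_nonneg (div_nonneg (ha i) (hM.1 i).le) (pow_nonneg ht i))

theorem aux_ratio {M : ℕ → ℝ} (hM : WeightSeq M) (hl : LogConvexSeq M) :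
    Monotone fun n => M (n + 1) / M n := by
  refine monotone_nat_of_le_succ fun n => ?_
  rw [div_le_div_iff₀ (hM.1 _) (hM.1 _)]
  have := hl (n + 1) (by omega)
  simp only [Nat.add_sub_cancel] at this
  nlinarith

theorem aux_max {M : ℕ → ℝ} (hM : WeightSeq M) (hl : LogConvexSeq M) (n i : ℕ) :
    (M (n + 1) / M n) ^ i / M i ≤ (M (n + 1) / M n) ^ n / M n := by
  have hr := aux_ratio hM hl
  have hs : 0 < M (n + 1) / M n := div_pos (hM.1 _) (hM.1 _)
  set s := M (n + 1) / M n with hsdef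
  rcases le_total n i with h | h
  · induction i, h using Nat.le_induction with
    | base => exact le_rfl
    | succ m hm ih =>
      refine le_trans ?_ ih
      have h1 : s ≤ M (m + 1) / M m := hr hm
      rw [le_div_iff₀ (hM.1 _)] at h1
      rw [div_le_div_iff₀ (hM.1 _) (hM.1 _), pow_succ, mul_assoc]
      gcongr
  · have key : ∀ m, i ≤ m → m ≤ n → s ^ i / M i ≤ s ^ m / M m := by
      intro m hm
      induction m, hm using Nat.le_induction with
      | base => intro _; exact le_rfl
      | succ m hm ih =>
        intro hmn
        refine le_trans (ih (by omega)) ?_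
        have h1 : M (m + 1) / M m ≤ s := hr (by omega : m ≤ n)
        rw [div_le_iff₀ (hM.1 _)] at h1
        rw [div_le_div_iff₀ (hM.1 _) (hM.1 _), pow_succ, mul_assoc]
        gcongr
    exact key n h le_rfl

theorem aux_key {M : ℕ → ℝ} (hM : WeightSeq M) (hl : LogConvexSeq M) {a : ℕ → ℝ}
    (ha : ∀ j, 0 ≤ a j) {c : ℝ} (hc : 0 < c) (hs : Summable fun j => a j / c ^ j) {d : ℝ}
    (hd : 0 < d) (hmem : (fun z => auxF M a z * auxF M a z) ∈ Hinf (vMc M d)) :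
    ∃ C : ℝ, ∀ j k, a j * a k * M (j + k) ≤ C * d ^ (j + k) * M j * M k := by
  rw [aux_mem] at hmem
  obtain ⟨-, C, hC⟩ := hmem
  refine ⟨|C|, fun j k => ?_⟩
  set n := j + k with hn
  set s := M (n + 1) / M n with hsdef
  have hs0 : 0 < s := div_pos (hM.1 _) (hM.1 _)
  have hE : Real.exp (omegaM M s) ≤ s ^ n / M n := aux_E_le hM hs0.le (aux_max hM hl n)
  have ht : 0 < s / d := div_pos hs0 hd
  have h1 := hC ((s / d : ℝ) : ℂ)
  rw [Complex.norm_real, Real.norm_of_nonneg ht.le, norm_mul, mul_div_cancel₀ _ hd.ne'] at h1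
  have hj := aux_F_ge hM ha hc hs ht.le j
  have hk := aux_F_ge hM ha hc hs ht.le k
  have pj := hM.1 j
  have pk := hM.1 k
  have pn := hM.1 n
  have aj := ha j
  have ak := ha k
  have h2 : (a j / M j * (s / d) ^ j) * (a k / M k * (s / d) ^ k) ≤ |C| * (s ^ n / M n) := by
    calc _ ≤ ‖auxF M a (s / d : ℝ)‖ * ‖auxF M a (s / d : ℝ)‖ := by gcongr
      _ ≤ C * Real.exp (omegaM M s) := h1
      _ ≤ |C| * Real.exp (omegaM M s) := by gcongr; exact le_abs_self C
      _ ≤ _ := by gcongr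
  have h3 : (a j / M j * (s / d) ^ j) * (a k / M k * (s / d) ^ k)
      = (a j * a k) * s ^ n / (M j * M k * d ^ n) := by
    rw [hn]; simp only [div_pow, pow_add]; field_simp
  rw [h3, ← mul_div_assoc, div_le_div_iff₀ (by positivity) pn] at h2
  have hsn : 0 < s ^ n := by positivity
  refine le_of_mul_le_mul_right ?_ hsn
  calc _ = a j * a k * s ^ n * M n := by ring
    _ ≤ _ := h2
    _ = _ := by ring

theorem aux_MG {M : ℕ → ℝ} (hM : WeightSeq M) {K A : ℝ}
    (h : ∀ j k, M (j + k) ≤ K * A ^ (j + k) * M j * M k) (hA : 0 ≤ A) : MGseq M := by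
  refine ⟨max 1 K * max 1 A, ?_, fun j k => ?_⟩
  · exact one_le_mul_of_one_le_of_one_le (le_max_left _ _) (le_max_left _ _)
  · have pj := hM.1 j
    have pk := hM.1 k
    rcases Nat.eq_zero_or_pos (j + k) with h0 | h0
    · obtain ⟨rfl, rfl⟩ : j = 0 ∧ k = 0 := by omega
      simp [hM.2.1]
    · refine (h j k).trans ?_
      have h1 : K ≤ (max 1 K) ^ (j + k) :=
        (le_max_right 1 K).trans (le_self_pow₀ (le_max_left _ _) h0.ne')
      rw [mul_pow]
      gcongr
      exact le_max_right _ _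

theorem aux_union {M : ℕ → ℝ} (hM : WeightSeq M) (hl : LogConvexSeq M)
    (h : ∀ f g : ℂ → ℂ,
        f ∈ ⋃ c : {c : ℝ // 0 < c}, Hinf (vMc M c.1) →
        g ∈ ⋃ c : {c : ℝ // 0 < c}, Hinf (vMc M c.1) →
        (fun z : ℂ => f z * g z) ∈ ⋃ c : {c : ℝ // 0 < c}, Hinf (vMc M c.1)) : MGseq M := by
  set a : ℕ → ℝ := fun j => (1 / 2) ^ j with hadef
  have ha : ∀ j, 0 ≤ a j := fun j => by positivity
  have hs : Summable fun j => a j / 1 ^ j := by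
    simpa [hadef] using summable_geometric_two
  have hm := aux_F_mem hM ha one_pos hs
  have hm' : auxF M a ∈ ⋃ c : {c : ℝ // 0 < c}, Hinf (vMc M c.1) :=
    Set.mem_iUnion.2 ⟨⟨1, one_pos⟩, hm⟩
  obtain ⟨⟨d, hd⟩, hmem⟩ := Set.mem_iUnion.1 (h _ _ hm' hm')
  obtain ⟨C, hC⟩ := aux_key hM hl ha one_pos hs hd hmem
  refine aux_MG hM (K := C) (A := 2 * d) (fun j k => ?_) (by positivity)
  have h1 := hC j k
  have h2 : a j * a k * 2 ^ (j + k) = 1 := by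
    simp only [hadef]; rw [← pow_add, ← mul_pow]; norm_num
  calc M (j + k) = (a j * a k * M (j + k)) * 2 ^ (j + k) := by linear_combination (-M (j + k)) * h2
    _ ≤ (C * d ^ (j + k) * M j * M k) * 2 ^ (j + k) := by gcongr
    _ = _ := by rw [mul_pow]; ring

/-- The normalized quotient measuring moderate growth. -/
noncomputable def auxρ (M : ℕ → ℝ) (p : ℕ × ℕ) : ℝ :=
  (M (p.1 + p.2) / (M p.1 * M p.2)) ^ (1 / ((p.1 + p.2 : ℕ) : ℝ))

/-- Running maximum of the quotients. -/
noncomputable def auxL (M : ℕ → ℝ) (n : ℕ) : ℝ :=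
  (Finset.range (n + 1) ×ˢ Finset.range (n + 1)).sup' ⟨(0, 0), by simp⟩ (auxρ M)

theorem aux_ρ_pow {M : ℕ → ℝ} (hM : WeightSeq M) (j k : ℕ) :
    auxρ M (j, k) ^ (j + k) = M (j + k) / (M j * M k) := by
  have hp : 0 < M (j + k) / (M j * M k) := div_pos (hM.1 _) (mul_pos (hM.1 _) (hM.1 _))
  rcases Nat.eq_zero_or_pos (j + k) with h0 | h0
  · obtain ⟨rfl, rfl⟩ : j = 0 ∧ k = 0 := by omega
    simp [hM.2.1]
  · rw [auxρ, ← Real.rpow_natCast, ← Real.rpow_mul hp.le]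
    have : ((j + k : ℕ) : ℝ) ≠ 0 := by positivity
    simp only
    rw [one_div, inv_mul_cancel₀ this, Real.rpow_one]

theorem aux_ρ_le_L {M : ℕ → ℝ} {j k n : ℕ} (hj : j ≤ n) (hk : k ≤ n) :
    auxρ M (j, k) ≤ auxL M n :=
  Finset.le_sup' (auxρ M) (by simp; omega)

theorem aux_L_mono {M : ℕ → ℝ} : Monotone (auxL M) := by
  intro m n hmn
  refine Finset.sup'_le _ _ ?_
  rintro ⟨j, k⟩ hp
  simp at hp
  exact aux_ρ_le_L (by omega) (by omega)

theorem aux_L_one {M : ℕ → ℝ} (n : ℕ) : 1 ≤ auxL M n := by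
  refine le_trans ?_ (aux_ρ_le_L (Nat.zero_le n) (Nat.zero_le n))
  simp [auxρ]

theorem aux_L_MG {M : ℕ → ℝ} (hM : WeightSeq M) {B : ℝ} (hB : ∀ n, auxL M n ≤ B) : MGseq M := by
  refine ⟨B, (aux_L_one 0).trans (hB 0), fun j k => ?_⟩
  have h1 := aux_ρ_pow hM j k
  have h2 : auxρ M (j, k) ≤ B :=
    (aux_ρ_le_L (le_max_left j k) (le_max_right j k)).trans (hB _)
  have pj := hM.1 j
  have pk := hM.1 k
  have pn := hM.1 (j + k)
  have h0 : 0 ≤ auxρ M (j, k) := Real.rpow_nonneg (by simp only; positivity) _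
  have h3 : M (j + k) / (M j * M k) ≤ B ^ (j + k) := by rw [← h1]; gcongr
  rw [div_le_iff₀ (by positivity)] at h3
  linarith

theorem aux_inter {M : ℕ → ℝ} (hM : WeightSeq M) (hl : LogConvexSeq M)
    (h : ∀ f g : ℂ → ℂ,
        f ∈ ⋂ c : {c : ℝ // 0 < c}, Hinf (vMc M c.1) →
        g ∈ ⋂ c : {c : ℝ // 0 < c}, Hinf (vMc M c.1) →
        (fun z : ℂ => f z * g z) ∈ ⋂ c : {c : ℝ // 0 < c}, Hinf (vMc M c.1)) : MGseq M := by
  by_cases hbd : ∃ B, ∀ n, auxL M n ≤ B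
  · obtain ⟨B, hB⟩ := hbd
    exact aux_L_MG hM hB
  have hlim : Tendsto (auxL M) atTop atTop := by
    push Not at hbd
    exact tendsto_atTop_atTop_of_monotone aux_L_mono fun b =>
      (hbd b).imp fun n hn => hn.le
  have hLpos : ∀ n, 0 < auxL M n := fun n => one_pos.trans_le (aux_L_one n)
  set δ : ℕ → ℝ := fun n => (√(auxL M n))⁻¹ with hδ
  have hδpos : ∀ n, 0 < δ n := fun n => inv_pos.2 (Real.sqrt_pos.2 (hLpos n))
  have hδanti : ∀ {m n}, m ≤ n → δ n ≤ δ m := fun {m n} hmn =>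
    inv_anti₀ (Real.sqrt_pos.2 (hLpos m)) (Real.sqrt_le_sqrt (aux_L_mono hmn))
  have hδlim : Tendsto δ atTop (nhds 0) :=
    (Real.tendsto_sqrt_atTop.comp hlim).inv_tendsto_atTop
  set a : ℕ → ℝ := fun j => δ j ^ j with hadef
  have ha : ∀ j, 0 ≤ a j := fun j => (pow_pos (hδpos j) j).le
  have hs : ∀ c : ℝ, 0 < c → Summable fun j => a j / c ^ j := by
    intro c hc
    refine Summable.of_norm_bounded_eventually_nat summable_geometric_two ?_
    filter_upwards [hδlim.eventually_le_const (by positivity : 0 < c / 2)] with j hj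
    rw [Real.norm_of_nonneg (div_nonneg (ha j) (by positivity)), hadef]
    simp only
    rw [← div_pow]
    have := (hδpos j).le
    refine pow_le_pow_left₀ (by positivity) ?_ j
    rw [div_le_iff₀ hc]; linarith
  have hm : auxF M a ∈ ⋂ c : {c : ℝ // 0 < c}, Hinf (vMc M c.1) :=
    Set.mem_iInter.2 fun c => aux_F_mem hM ha c.2 (hs c.1 c.2)
  have hmem := Set.mem_iInter.1 (h _ _ hm hm) ⟨1, one_pos⟩
  obtain ⟨C, hC⟩ := aux_key hM hl ha one_pos (hs 1 one_pos) one_pos hmem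
  refine (hbd ⟨(max 1 C) ^ 2, fun N => ?_⟩).elim
  obtain ⟨⟨j, k⟩, hp, heq⟩ := Finset.exists_mem_eq_sup'
    (s := Finset.range (N + 1) ×ˢ Finset.range (N + 1)) ⟨(0, 0), by simp⟩ (auxρ M)
  change auxL M N = auxρ M (j, k) at heq
  simp at hp
  have pj := hM.1 j
  have pk := hM.1 k
  have pn := hM.1 (j + k)
  have h1 := hC j k
  rcases Nat.eq_zero_or_pos (j + k) with h0 | h0
  · obtain ⟨rfl, rfl⟩ : j = 0 ∧ k = 0 := by omega
    rw [heq]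
    have h00 : auxρ M (0, 0) = 1 := by simp [auxρ]
    rw [h00]
    exact one_le_pow₀ (le_max_left 1 C)
  have h2 : auxL M N ^ (j + k) = M (j + k) / (M j * M k) := by rw [heq, aux_ρ_pow hM]
  set q := √(auxL M N) with hq
  have hqpos : 0 < q := Real.sqrt_pos.2 (hLpos N)
  have hqsq : q ^ 2 = auxL M N := Real.sq_sqrt (hLpos N).le
  have h3 : (q⁻¹) ^ (j + k) ≤ a j * a k := by
    rw [pow_add]
    have e1 : q⁻¹ ≤ δ j := hδanti (by omega : j ≤ N)
    have e2 : q⁻¹ ≤ δ k := hδanti (by omega : k ≤ N)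
    simp only [hadef]
    have := hδpos j
    gcongr
  have h4 : M (j + k) = q ^ (j + k) * q ^ (j + k) * (M j * M k) := by
    rw [← mul_pow, ← sq, hqsq, h2]; field_simp
  have h5 : q ^ (j + k) ≤ C := by
    have hmm : 0 < M j * M k := by positivity
    refine le_of_mul_le_mul_right ?_ hmm
    calc q ^ (j + k) * (M j * M k) = (q⁻¹) ^ (j + k) * M (j + k) := by
          rw [h4, inv_pow]; field_simp
      _ ≤ a j * a k * M (j + k) := by gcongr
      _ ≤ _ := h1
      _ = _ := by simp; ring
  have h6 : q ≤ max 1 C := by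
    by_contra hlt
    push Not at hlt
    have hq1 : 1 ≤ q := (le_max_left 1 C).trans hlt.le
    have := le_self_pow₀ hq1 h0.ne'
    have := le_max_right 1 C
    linarith
  rw [← hqsq]
  gcongr

/-- Theorem: for a log-convex weight sequence `M`, closedness under pointwise
multiplication of the union `⋃_{c>0} H^∞_{v_{M,c}}(ℂ)`, closedness of the
intersection `⋂_{c>0} H^∞_{v_{M,c}}(ℂ)`, and moderate growth (mg) of `M` are
all equivalent. -/
theorem stmt19 (M : ℕ → ℝ) (hM : WeightSeq M) (hMlc : LogConvexSeq M) :
    ((∀ f g : ℂ → ℂ,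
        f ∈ ⋃ c : {c : ℝ // 0 < c}, Hinf (vMc M c.1) →
        g ∈ ⋃ c : {c : ℝ // 0 < c}, Hinf (vMc M c.1) →
        (fun z : ℂ => f z * g z) ∈ ⋃ c : {c : ℝ // 0 < c}, Hinf (vMc M c.1)) ↔
      MGseq M) ∧
    ((∀ f g : ℂ → ℂ,
        f ∈ ⋂ c : {c : ℝ // 0 < c}, Hinf (vMc M c.1) →
        g ∈ ⋂ c : {c : ℝ // 0 < c}, Hinf (vMc M c.1) →
        (fun z : ℂ => f z * g z) ∈ ⋂ c : {c : ℝ // 0 < c}, Hinf (vMc M c.1)) ↔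
      MGseq M) := by
  constructor
  · refine ⟨aux_union hM hMlc, ?_⟩
    rintro ⟨C, hC, h⟩ f g hf hg
    obtain ⟨⟨c, hc⟩, hf⟩ := Set.mem_iUnion.1 hf
    obtain ⟨⟨d, hd⟩, hg⟩ := Set.mem_iUnion.1 hg
    have hm : 0 < max c d := lt_max_of_lt_left hc
    exact Set.mem_iUnion.2 ⟨⟨C * max c d, by positivity⟩,
      aux_mul hM hC h hm (aux_Hmono hM hc (le_max_left c d) hf)
        (aux_Hmono hM hd (le_max_right c d) hg)⟩
  · refine ⟨aux_inter hM hMlc, ?_⟩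
    rintro ⟨C, hC, h⟩ f g hf hg
    refine Set.mem_iInter.2 ?_
    rintro ⟨c, hc⟩
    have hC0 : 0 < C := by linarith
    have hcC : 0 < c / C := div_pos hc hC0
    have := aux_mul hM hC h hcC (Set.mem_iInter.1 hf ⟨c / C, hcC⟩)
      (Set.mem_iInter.1 hg ⟨c / C, hcC⟩)
    rwa [mul_div_cancel₀ _ hC0.ne'] at this
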